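/- Let q be a real number with 0 < q and q ≠ 1, let h₁, h₂, l₁, α₁, λ be real numbers and t₁, t₂ nonzero reals, and let (i,i') = (1,2) or (i,i') = (2,1). Assume λ + α₁ = -N for some positive integer N (so (q^{λ+α₁};q)_n = 0 for all n > N and the series below is a finite sum), and assume q^{h_i-l₁+n}·t_i/t₁ ≠ 1 for all integers 1 ≤ n ≤ N. Then the function g(x) = x^{λ} · Σ_{n=0}^{N} [(q^{λ+α₁};q)_n / ((q^{h_i-l₁+1}·t_i/t₁;q)_n (q;q)_n)] · (q^{h_i+1/2}t_i/x;q)_n · (x/(q^{h_{i'}-1/2}t_{i'}))^n satisfies the variant of the confluent q-hypergeometric equation of type (1,2) for all x > 0. -/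

import Mathlib

/-- The finite q-shifted factorial `(a;q)_n = ∏_{i=0}^{n-1} (1 - a q^i)`. -/
noncomputable def qPoch (q a : ℝ) (n : ℕ) : ℝ :=
  ∏ i ∈ Finset.range n, (1 - a * q ^ i)

/-- The variant of the confluent q-hypergeometric equation of type (1,2) (for `x > 0`). -/
def confEq12 (q h₁ h₂ l₁ α₁ lam t₁ t₂ : ℝ) (g : ℝ → ℝ) : Prop :=
  ∀ x : ℝ, 0 < x →
    q ^ (h₁ + h₂ - l₁ - 2 * lam + 1/2) * t₂ * (q ^ (l₁ - 1/2) * t₁ - x) * g (q * x)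
    + (x - q ^ (h₁ + 1/2) * t₁) * (x - q ^ (h₂ + 1/2) * t₂) * g (x / q)
    - (q ^ α₁ * x ^ 2
        - q ^ (h₁ + h₂ - lam + 1/2) * (q ^ (-h₂) * t₁ + q ^ (-h₁) * t₂ + q ^ (-l₁) * t₂) * x
        + q ^ (h₁ + h₂ - lam) * (q + 1) * t₁ * t₂) * g x = 0

/-!
Dividing out `x ^ lam` turns the equation into `L f = 0` for a second-order `q`-difference operator
`L` whose coefficients are polynomials in `x`. On the `q`-analogues `φ n` of `(x - a) ^ n` the
operator is two-diagonal up to the factor `x ^ 2`: it sends `φ n` to `x ^ 2` times a combination of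
`φ n` and `φ (n - 1)`. The coefficients of the series are those for which `L (∑ n ≤ N, u n • φ n)`
telescopes to a multiple of `1 - D * q ^ N`, which vanishes because `D = q ^ (lam + α₁) = q ^ (-N)`.
-/

open Finset

/-- The `q`-analogue `(x - a) (x - a q) ⋯ (x - a q ^ (n - 1))` of the power `(x - a) ^ n`; these
polynomials form the basis on which the `q`-difference operator is two-diagonal. -/
def qSubPow {R : Type*} [CommRing R] (q a : R) (n : ℕ) (x : R) : R :=
  ∏ i ∈ range n, (x - a * q ^ i)

section QSubPow

variable {R : Type*} [CommRing R] (q a : R) (n : ℕ) (x : R)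

@[simp]
theorem qSubPow_zero : qSubPow q a 0 x = 1 :=
  prod_range_zero _

theorem qSubPow_succ : qSubPow q a (n + 1) x = qSubPow q a n x * (x - a * q ^ n) :=
  prod_range_succ _ _

theorem qSubPow_succ_mul_left :
    qSubPow q a (n + 1) (q * x) = q ^ n * (q * x - a) * qSubPow q a n x := by
  have hfactor : ∀ i, q * x - a * q ^ (i + 1) = q * (x - a * q ^ i) := fun i => by ring
  simp only [qSubPow, prod_range_succ', hfactor, prod_mul_distrib, prod_const, card_range,
    pow_zero, mul_one]
  ring

end QSubPow

theorem sub_mul_qSubPow_div {K : Type*} [Field K] {q : K} (hq : q ≠ 0) (a : K) (n : ℕ) (x : K) :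
    (x - a) * qSubPow q a n (x / q) = qSubPow q a (n + 1) x / q ^ n := by
  have h := qSubPow_succ_mul_left q a n (x / q)
  rw [mul_div_cancel₀ x hq] at h
  rw [h]
  field_simp

/-- The `q`-difference operator to which the confluent equation of type (1,2) reduces after the
factor `x ^ lam` is removed. The parameters are `a = q ^ (h₁ + 1/2) t₁`, `b = q ^ (h₂ + 1/2) t₂`,
`d = q ^ (-l₁ - 1/2) / t₁` and `D = q ^ (lam + α₁)`; in them the operator is symmetric in `a` and
`b`, which accounts for the two choices of `(i, i')`. -/
def confluentOp {K : Type*} [Field K] (q a b d D : K) : (K → K) →ₗ[K] (K → K) where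
  toFun f x :=
    a * b * (q⁻¹ - d * x) * f (q * x) + (x - a) * (x - b) * f (x / q)
      - (D * x ^ 2 - (a + b + a * b * d) * x + (1 + q⁻¹) * (a * b)) * f x
  map_add' f g := by
    ext x
    simp only [Pi.add_apply]
    ring
  map_smul' r f := by
    ext x
    simp only [Pi.smul_apply, smul_eq_mul, RingHom.id_apply]
    ring

section ConfluentOp

variable {K : Type*} [Field K]

theorem confluentOp_apply (q a b d D : K) (f : K → K) (x : K) :
    confluentOp q a b d D f x =
      a * b * (q⁻¹ - d * x) * f (q * x) + (x - a) * (x - b) * f (x / q)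
        - (D * x ^ 2 - (a + b + a * b * d) * x + (1 + q⁻¹) * (a * b)) * f x :=
  rfl

theorem confluentOp_swap (q a b d D : K) : confluentOp q a b d D = confluentOp q b a d D := by
  ext f x
  simp only [confluentOp_apply]
  ring

theorem confluentOp_qSubPow_zero (q a b d D x : K) :
    confluentOp q a b d D (qSubPow q a 0) x = x ^ 2 * (1 - D) := by
  simp only [confluentOp_apply, qSubPow_zero]
  ring

theorem confluentOp_qSubPow_succ {q : K} (hq : q ≠ 0) (a b d D : K) (n : ℕ) (x : K) :
    confluentOp q a b d D (qSubPow q a (n + 1)) x =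
      x ^ 2 * ((1 / q ^ (n + 1) - D) * qSubPow q a (n + 1) x
        - b / q ^ (n + 1) * (1 - a * d * q ^ (n + 1)) * (1 - q ^ (n + 1)) * qSubPow q a n x) := by
  rw [confluentOp_apply, qSubPow_succ_mul_left, mul_right_comm (x - a), sub_mul_qSubPow_div hq,
    qSubPow_succ q a (n + 1), qSubPow_succ q a n]
  field_simp
  ring

theorem confluentOp_sum_qSubPow {q : K} (hq : q ≠ 0) (a b d D : K) {u : ℕ → K} {N : ℕ}
    (hu : ∀ n < N, u (n + 1) * (b * (1 - a * d * q ^ (n + 1)) * (1 - q ^ (n + 1)))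
      = q * (1 - D * q ^ n) * u n) (x : K) :
    confluentOp q a b d D (∑ n ∈ range (N + 1), u n • qSubPow q a n) x =
      x ^ 2 * u N * (1 / q ^ N - D) * qSubPow q a N x := by
  induction N with
  | zero =>
    rw [zero_add, sum_range_one, map_smul, Pi.smul_apply, confluentOp_qSubPow_zero, smul_eq_mul,
      qSubPow_zero]
    ring
  | succ N ih =>
    have hcancel : u (N + 1) *
        (b / q ^ (N + 1) * (1 - a * d * q ^ (N + 1)) * (1 - q ^ (N + 1))) =
          u N * (1 / q ^ N - D) := by
      calc _ = u (N + 1) * (b * (1 - a * d * q ^ (N + 1)) * (1 - q ^ (N + 1))) / q ^ (N + 1) := by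
            ring
        _ = q * (1 - D * q ^ N) * u N / q ^ (N + 1) := by rw [hu N N.lt_succ_self]
        _ = _ := by
            rw [pow_succ']
            field_simp
    rw [sum_range_succ, map_add, map_smul, Pi.add_apply, Pi.smul_apply, smul_eq_mul,
      ih fun n hn => hu n (hn.trans N.lt_succ_self), confluentOp_qSubPow_succ hq]
    linear_combination -(x ^ 2 * qSubPow q a N x) * hcancel

end ConfluentOp

theorem qPoch_succ (q a : ℝ) (n : ℕ) : qPoch q a (n + 1) = qPoch q a n * (1 - a * q ^ n) :=
  prod_range_succ _ _

theorem qPoch_div_mul_pow (q a : ℝ) {x : ℝ} (hx : x ≠ 0) (n : ℕ) :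
    qPoch q (a / x) n * x ^ n = qSubPow q a n x := by
  have hfactor : ∀ i, (1 - a / x * q ^ i) * x = x - a * q ^ i := fun i => by field_simp
  simp only [qPoch, qSubPow, ← hfactor, prod_mul_distrib, prod_const, card_range]

/-- The coefficients of the series solution in the basis `qSubPow q a n`, in the parameters of
`confluentOp`: the lower parameter `q ^ (hᵢ - l₁ + 1) tᵢ / t₁` of the series is `a * d * q`. -/
noncomputable def confluentCoeff (q a b d D : ℝ) (n : ℕ) : ℝ :=
  qPoch q D n / (qPoch q (a * d * q) n * qPoch q q n) * (q / b) ^ n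

theorem confluentCoeff_succ_mul {q a b d D : ℝ} {n : ℕ} (hb : b ≠ 0)
    (hd : a * d * q ^ (n + 1) ≠ 1) (hq : q ^ (n + 1) ≠ 1) :
    confluentCoeff q a b d D (n + 1) * (b * (1 - a * d * q ^ (n + 1)) * (1 - q ^ (n + 1))) =
      q * (1 - D * q ^ n) * confluentCoeff q a b d D n := by
  have hd' : 1 - a * d * q ^ (n + 1) ≠ 0 := sub_ne_zero.2 hd.symm
  have hq' : 1 - q ^ (n + 1) ≠ 0 := sub_ne_zero.2 hq.symm
  simp only [confluentCoeff, qPoch_succ, mul_assoc _ q, ← pow_succ' q n, pow_succ (q / b)]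
  field_simp

/-- The polynomial in `x` that remains of the terminating series solution after the factor `x ^ lam`
is removed, in the parameters of `confluentOp`. -/
noncomputable def confluentPoly (q a b d D : ℝ) (N : ℕ) : ℝ → ℝ :=
  ∑ n ∈ range (N + 1), confluentCoeff q a b d D n • qSubPow q a n

theorem confluentPoly_apply (q a b d D : ℝ) (N : ℕ) {x : ℝ} (hx : x ≠ 0) :
    confluentPoly q a b d D N x =
      ∑ n ∈ range (N + 1), qPoch q D n / (qPoch q (a * d * q) n * qPoch q q n) *
        qPoch q (a / x) n * (x / (b / q)) ^ n := by
  simp only [confluentPoly, Finset.sum_apply, Pi.smul_apply, smul_eq_mul, confluentCoeff,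
    ← qPoch_div_mul_pow q a hx]
  refine sum_congr rfl fun n _ => ?_
  rw [div_div_eq_mul_div, mul_div_assoc, mul_pow]
  ring

theorem confluentOp_confluentPoly {q a b d D : ℝ} {N : ℕ} (hq : q ≠ 0) (hb : b ≠ 0)
    (hd : ∀ n : ℕ, 1 ≤ n → n ≤ N → a * d * q ^ n ≠ 1) (hqN : ∀ n : ℕ, 1 ≤ n → n ≤ N → q ^ n ≠ 1)
    (hD : D * q ^ N = 1) :
    confluentOp q a b d D (confluentPoly q a b d D N) = 0 := by
  ext x
  rw [confluentPoly, confluentOp_sum_qSubPow hq a b d D fun n hn =>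
      confluentCoeff_succ_mul hb (hd (n + 1) n.succ_pos hn) (hqN (n + 1) n.succ_pos hn),
    ← eq_one_div_of_mul_eq_one_left hD, sub_self, mul_zero, zero_mul, Pi.zero_apply]

theorem rpow_sub_half {q : ℝ} (hq : q ≠ 0) (h : ℝ) : q ^ (h - 1/2) = q ^ (h + 1/2) / q := by
  rw [← Real.rpow_sub_one hq]
  ring_nf

theorem rpow_sub_add_natCast_mul_div {q : ℝ} (hq : 0 < q) (h l t s : ℝ) (n : ℕ) :
    q ^ (h - l + n) * t / s = q ^ (h + 1/2) * t * (q ^ (l + 1/2) * s)⁻¹ * q ^ n := by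
  have hexp : h - l + n = (h + 1/2) - (l + 1/2) + n := by ring
  rw [hexp, Real.rpow_add hq, Real.rpow_sub hq, Real.rpow_natCast, mul_inv]
  ring

theorem confEq12.congr {q h₁ h₂ l₁ α₁ lam t₁ t₂ : ℝ} {f g : ℝ → ℝ} (hq : 0 < q)
    (hf : confEq12 q h₁ h₂ l₁ α₁ lam t₁ t₂ f) (hfg : Set.EqOn f g (Set.Ioi 0)) :
    confEq12 q h₁ h₂ l₁ α₁ lam t₁ t₂ g := by
  intro x hx
  rw [← hfg (mul_pos hq hx), ← hfg (div_pos hx hq), ← hfg hx]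
  exact hf x hx

theorem confEq12_rpow_mul_iff {q t₁ : ℝ} (h₁ h₂ l₁ α₁ lam t₂ : ℝ) (hq : 0 < q) (ht₁ : t₁ ≠ 0)
    (f : ℝ → ℝ) :
    confEq12 q h₁ h₂ l₁ α₁ lam t₁ t₂ (fun x => x ^ lam * f x) ↔
      ∀ x, 0 < x → confluentOp q (q ^ (h₁ + 1/2) * t₁) (q ^ (h₂ + 1/2) * t₂)
        (q ^ (l₁ + 1/2) * t₁)⁻¹ (q ^ (lam + α₁)) f x = 0 := by
  refine forall₂_congr fun x hx => ?_
  have hscale : x ^ lam / q ^ lam ≠ 0 := by positivity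
  refine Iff.trans (Eq.congr_left ?_) (mul_eq_zero_iff_left hscale)
  have hleft : q ^ (h₁ + h₂ - l₁ - 2 * lam + 1/2) =
      q ^ (h₁ + 1/2) * q ^ (h₂ + 1/2) / q ^ (l₁ + 1/2) / q ^ lam / q ^ lam := by
    simp only [← Real.rpow_add hq, ← Real.rpow_sub hq]
    ring_nf
  have hα : q ^ α₁ = q ^ (lam + α₁) / q ^ lam := by
    rw [← Real.rpow_sub hq, add_sub_cancel_left]
  have hmid₁ : q ^ (h₁ + h₂ - lam + 1/2) * q ^ (-h₂) = q ^ (h₁ + 1/2) / q ^ lam := by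
    simp only [← Real.rpow_add hq, ← Real.rpow_sub hq]
    ring_nf
  have hmid₂ : q ^ (h₁ + h₂ - lam + 1/2) * q ^ (-h₁) = q ^ (h₂ + 1/2) / q ^ lam := by
    simp only [← Real.rpow_add hq, ← Real.rpow_sub hq]
    ring_nf
  have hmid₃ : q ^ (h₁ + h₂ - lam + 1/2) * q ^ (-l₁) =
      q ^ (h₁ + 1/2) * q ^ (h₂ + 1/2) / q ^ (l₁ + 1/2) / q ^ lam := by
    simp only [← Real.rpow_add hq, ← Real.rpow_sub hq]
    ring_nf
  have hlast : q ^ (h₁ + h₂ - lam) = q ^ (h₁ + 1/2) * q ^ (h₂ + 1/2) / q ^ lam / q := by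
    rw [← Real.rpow_add hq, ← Real.rpow_sub hq, ← Real.rpow_sub_one hq.ne']
    ring_nf
  simp only [Real.mul_rpow hq.le hx.le, Real.div_rpow hx.le hq.le, mul_add (q ^ (_ : ℝ)),
    ← mul_assoc (q ^ (_ : ℝ)), hleft, rpow_sub_half hq.ne', hα, hmid₁, hmid₂, hmid₃, hlast,
    confluentOp_apply]
  field_simp

theorem stmt6 (q h₁ h₂ l₁ α₁ lam t₁ t₂ hᵢ hᵢ' tᵢ tᵢ' : ℝ) (N : ℕ)
    (hq : 0 < q) (hq1 : q ≠ 1) (ht₁ : t₁ ≠ 0) (ht₂ : t₂ ≠ 0)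
    (hidx : (hᵢ, hᵢ', tᵢ, tᵢ') = (h₁, h₂, t₁, t₂) ∨ (hᵢ, hᵢ', tᵢ, tᵢ') = (h₂, h₁, t₂, t₁))
    (hN : 0 < N) (hNlam : lam + α₁ = -(N : ℝ))
    (hden : ∀ n : ℕ, 1 ≤ n → n ≤ N → q ^ (hᵢ - l₁ + (n : ℝ)) * tᵢ / t₁ ≠ 1) :
    confEq12 q h₁ h₂ l₁ α₁ lam t₁ t₂ (fun x =>
      x ^ lam * ∑ n ∈ Finset.range (N + 1),
        qPoch q (q ^ (lam + α₁)) n /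
            (qPoch q (q ^ (hᵢ - l₁ + 1) * tᵢ / t₁) n * qPoch q q n) *
          qPoch q (q ^ (hᵢ + 1/2) * tᵢ / x) n * (x / (q ^ (hᵢ' - 1/2) * tᵢ')) ^ n) := by
  set a := q ^ (hᵢ + 1/2) * tᵢ
  set b := q ^ (hᵢ' + 1/2) * tᵢ' with hb
  set d := (q ^ (l₁ + 1/2) * t₁)⁻¹
  set D := q ^ (lam + α₁) with hD
  have hlower (n : ℕ) : q ^ (hᵢ - l₁ + n) * tᵢ / t₁ = a * d * q ^ n :=
    rpow_sub_add_natCast_mul_div hq hᵢ l₁ tᵢ t₁ n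
  have hpoly : confluentOp q a b d D (confluentPoly q a b d D N) = 0 := by
    refine confluentOp_confluentPoly hq.ne' ?_ (fun n hn hnN => hlower n ▸ hden n hn hnN)
      (fun n hn _ => (pow_eq_one_iff_of_nonneg hq.le (Nat.one_le_iff_ne_zero.1 hn)).not.2 hq1) ?_
    · rcases hidx with h | h <;> cases h <;> positivity
    · rw [hD, hNlam, Real.rpow_neg hq.le, Real.rpow_natCast, inv_mul_cancel₀ (by positivity)]
  have heq : confEq12 q h₁ h₂ l₁ α₁ lam t₁ t₂ fun x => x ^ lam * confluentPoly q a b d D N x := by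
    refine (confEq12_rpow_mul_iff h₁ h₂ l₁ α₁ lam t₂ hq ht₁ _).2 fun x _ => ?_
    rcases hidx with h | h <;> cases h
    · exact congrFun hpoly x
    · exact congrFun (confluentOp_swap q b a d D ▸ hpoly) x
  refine heq.congr hq fun x hx => ?_
  have hlower₁ : q ^ (hᵢ - l₁ + 1) * tᵢ / t₁ = a * d * q := by simpa using hlower 1
  have hupper : q ^ (hᵢ' - 1/2) * tᵢ' = b / q := by
    rw [rpow_sub_half hq.ne', hb, mul_div_right_comm]
  simp only [confluentPoly_apply q a b d D N (ne_of_gt hx), hlower₁, hupper]
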